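/- arXiv:1601.06475 — 3 statements merged into one kernel-verified Lean document; each statement's English description precedes it below -/
import Mathlib

section
/- Let s ≥ 2, t ≥ 0, n = 3s + t, k = 2s − 1 + t, and let l_1, …, l_n : ℂ^k → ℂ have every k of them linearly independent. Suppose that for some t-element subset T ⊆ {1, …, n}, the restrictions of the remaining 3s functionals l_r (r ∉ T) to the (2s−1)-dimensional subspace E = ⋂_{i∈T} ker l_i form a dependent collection. Then the discriminantal arrangement B(n, k) admits a codimension-2 stratum of multiplicity 3, i.e. there exist three pairwise distinct (k+1)-element subsets K_1, K_2, K_3 of {1, …, n} with |K_1 ∪ K_2 ∪ K_3| ≥ k + 3 such that D_{K_1} ∩ D_{K_2} ∩ D_{K_3} has codimension 2 in ℂ^n. -/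
open Module Submodule

/-- The subspace `D_J ⊆ ℂ^ι` of translation vectors `x` for which the translated
hyperplanes `{l i = x i}`, `i ∈ J`, have a common point. -/
noncomputable def DD {ι V : Type*} [AddCommGroup V] [Module ℂ V]
    (l : ι → Module.Dual ℂ V) (J : Finset ι) : Submodule ℂ (ι → ℂ) where
  carrier := {x | ∃ y : V, ∀ i ∈ J, x i = l i y}
  add_mem' := by
    rintro a b ⟨y, hy⟩ ⟨z, hz⟩
    exact ⟨y + z, fun i hi => by simp [hy i hi, hz i hi]⟩
  zero_mem' := ⟨0, fun i _ => by simp⟩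
  smul_mem' := by
    rintro c a ⟨y, hy⟩
    exact ⟨c • y, fun i hi => by simp [hy i hi]⟩

/-!
Under the dot product, the linear relations `∑ i, c i • l i = 0` supported on `J` are the
annihilator of `D_J`; when `J` has `k + 1` elements and every `k` of the `l i` are independent,
a nonzero relation on `J` spans them all. Dependence of the restrictions to `E` gives a functional
`f` that does not vanish on `E` but vanishes on the common kernels of the `l i` over `T ∪ A`, over
`T ∪ B` and over `T ∪ C`. Hence `f` is a combination of the `l i` with coefficient vectors `a`, `b`,
`c` supported on these three sets. The differences `a - b`, `a - c`, `b - c` are the relations on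
`T ∪ A ∪ B`, `T ∪ A ∪ C` and `T ∪ B ∪ C`, and they span only a plane, so the three hyperplanes meet
in codimension two.
-/

section LinearRelations

variable {ι R M : Type*} [Fintype ι] [Ring R] [AddCommGroup M] [Module R M] {v : ι → M}

/-- The space of linear relations `∑ i, c i • v i = 0` whose coefficients vanish off `J`. Under
the dot product, the relations among the `l i` on `J` are the annihilator of `D_J`. -/
def relationsOn (v : ι → M) (J : Finset ι) : Submodule R (ι → R) :=
  LinearMap.ker (Fintype.linearCombination R v) ⊓ Submodule.pi (J : Set ι)ᶜ fun _ => ⊥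

lemma mem_relationsOn {J : Finset ι} {c : ι → R} :
    c ∈ relationsOn v J ↔ ∑ i, c i • v i = 0 ∧ ∀ i ∉ J, c i = 0 := by
  simp [relationsOn, Fintype.linearCombination_apply]

lemma sub_mem_relationsOn [DecidableEq ι] {I J : Finset ι} {a b : ι → R}
    (ha : ∀ i ∉ I, a i = 0) (hb : ∀ i ∉ J, b i = 0) (hab : ∑ i, a i • v i = ∑ i, b i • v i) :
    a - b ∈ relationsOn v (I ∪ J) := by
  refine mem_relationsOn.2 ⟨by simp [sub_smul, hab], fun i hi => ?_⟩
  rw [Finset.notMem_union] at hi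
  simp [ha i hi.1, hb i hi.2]

lemma relationsOn_eq_bot {J : Finset ι} (hv : LinearIndepOn R v (J : Set ι)) :
    relationsOn v J = (⊥ : Submodule R (ι → R)) := by
  refine (Submodule.eq_bot_iff _).2 fun c hc => ?_
  obtain ⟨hsum, hoff⟩ := mem_relationsOn.1 hc
  rw [← Finset.sum_subset J.subset_univ fun i _ hi => by simp [hoff i hi]] at hsum
  ext i
  by_cases hi : i ∈ J
  · exact linearIndepOn_finset_iff.1 hv c hsum i hi
  · exact hoff i hi

end LinearRelations

section LinearRelationsDivisionRing

variable {ι K M : Type*} [Fintype ι] [DecidableEq ι] [DivisionRing K] [AddCommGroup M] [Module K M]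
  {v : ι → M}

lemma relationsOn_eq_span_singleton {J : Finset ι} {j : ι} {c : ι → K}
    (hv : LinearIndepOn K v (J.erase j : Set ι)) (hc : c ∈ relationsOn v J) (hj : c j ≠ 0) :
    relationsOn v J = K ∙ c := by
  refine le_antisymm (fun d hd => ?_) ((span_singleton_le_iff_mem _ _).2 hc)
  have hmem : d - (d j / c j) • c ∈ relationsOn v (J.erase j) := by
    obtain ⟨hsum, hoff⟩ := mem_relationsOn.1 (sub_mem hd (smul_mem _ (d j / c j) hc))
    refine mem_relationsOn.2 ⟨hsum, fun i hi => ?_⟩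
    by_cases hij : i = j
    · simp [hij, hj]
    · exact hoff i fun hiJ => hi (Finset.mem_erase.2 ⟨hij, hiJ⟩)
  rw [relationsOn_eq_bot hv, mem_bot, sub_eq_zero] at hmem
  exact mem_span_singleton.2 ⟨_, hmem.symm⟩

lemma relationsOn_union_eq_span_sub {I J : Finset ι} {a b : ι → K} {p : ι}
    (ha : ∀ i ∉ I, a i = 0) (hb : ∀ i ∉ J, b i = 0) (hab : ∑ i, a i • v i = ∑ i, b i • v i)
    (hap : a p ≠ 0) (hpJ : p ∉ J) (hv : LinearIndepOn K v ((I ∪ J).erase p : Set ι)) :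
    relationsOn v (I ∪ J) = K ∙ (a - b) :=
  relationsOn_eq_span_singleton hv (sub_mem_relationsOn ha hb hab) (by simpa [hb p hpJ] using hap)

end LinearRelationsDivisionRing

section Coefficients

variable {ι : Type*} [Fintype ι]

lemma exists_sum_smul_eq_of_iInf_ker_le_ker {K V : Type*} [Field K] [AddCommGroup V]
    [Module K V] {l : ι → Dual K V} {S : Finset ι} {f : Dual K V}
    (h : ⨅ i ∈ S, LinearMap.ker (l i) ≤ LinearMap.ker f) :
    ∃ c : ι → K, (∀ i ∉ S, c i = 0) ∧ ∑ i, c i • l i = f := by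
  classical
  rw [iInf_subtype'] at h
  obtain ⟨c, hc⟩ := (mem_span_range_iff_exists_fun K).1 (mem_span_of_iInf_ker_le_ker h)
  refine ⟨fun i => if hi : i ∈ S then c ⟨i, hi⟩ else 0, fun i hi => dif_neg hi, ?_⟩
  rw [← hc, ← Finset.sum_subset S.subset_univ fun i _ hi => by simp [hi], ← Finset.sum_coe_sort S]
  simp

lemma exists_notMem_ne_zero_of_not_iInf_ker_le_ker {R M : Type*} [CommRing R] [AddCommGroup M]
    [Module R M] {l : ι → Dual R M} {T : Finset ι} {c : ι → R}
    (hT : ¬ ⨅ i ∈ T, LinearMap.ker (l i) ≤ LinearMap.ker (∑ i, c i • l i)) :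
    ∃ i ∉ T, c i ≠ 0 := by
  by_contra! hc
  refine hT fun y hy => ?_
  simp only [mem_iInf, LinearMap.mem_ker] at hy
  simp only [LinearMap.mem_ker, LinearMap.sum_apply, LinearMap.smul_apply]
  refine Finset.sum_eq_zero fun i _ => ?_
  by_cases hi : i ∈ T
  · rw [hy i hi, smul_zero]
  · rw [hc i hi, zero_smul]

end Coefficients

section Restriction

variable {ι K V : Type*} [Field K] [AddCommGroup V] [Module K V]

lemma map_subtype_iInf_ker_domRestrict (l : ι → Dual K V) (E : Submodule K V) (A : Finset ι) :
    (⨅ r ∈ A, LinearMap.ker ((l r).domRestrict E)).map E.subtype =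
      E ⊓ ⨅ r ∈ A, LinearMap.ker (l r) := by
  simp only [← map_comap_subtype, comap_iInf]
  rfl

lemma exists_map_subtype_le_ker_of_ne_top {E : Submodule K V} {W : Submodule K E} (hW : W ≠ ⊤) :
    ∃ f : Dual K V, ¬ E ≤ LinearMap.ker f ∧ W.map E.subtype ≤ LinearMap.ker f := by
  obtain ⟨x, -, hx⟩ := SetLike.exists_of_lt hW.lt_top
  have hx' : (x : V) ∉ W.map E.subtype := by simpa using hx
  obtain ⟨f, hfx, hf⟩ := exists_le_ker_of_notMem hx'
  exact ⟨f, fun hE => hfx (hE x.2), hf⟩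

lemma exists_dual_of_sup_iInf_ker_domRestrict_ne_top [DecidableEq ι] {l : ι → Dual K V}
    {T A B C : Finset ι} {E : Submodule K V} (hE : E = ⨅ i ∈ T, LinearMap.ker (l i))
    (hdep : (⨅ r ∈ A, LinearMap.ker ((l r).domRestrict E)) ⊔
      (⨅ r ∈ B, LinearMap.ker ((l r).domRestrict E)) ⊔
      (⨅ r ∈ C, LinearMap.ker ((l r).domRestrict E)) ≠ ⊤) :
    ∃ f : Dual K V, ¬ ⨅ i ∈ T, LinearMap.ker (l i) ≤ LinearMap.ker f ∧
      ⨅ i ∈ T ∪ A, LinearMap.ker (l i) ≤ LinearMap.ker f ∧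
      ⨅ i ∈ T ∪ B, LinearMap.ker (l i) ≤ LinearMap.ker f ∧
      ⨅ i ∈ T ∪ C, LinearMap.ker (l i) ≤ LinearMap.ker f := by
  obtain ⟨f, hfE, hf⟩ := exists_map_subtype_le_ker_of_ne_top hdep
  simp only [Submodule.map_sup, map_subtype_iInf_ker_domRestrict, sup_le_iff] at hf
  simp only [Finset.iInf_union, ← hE]
  exact ⟨f, hfE, hf.1.1, hf.1.2, hf.2⟩

end Restriction

section Triangle

lemma finrank_span_sub_sup_span_sub_sup_span_sub {K W : Type*} [DivisionRing K]
    [AddCommGroup W] [Module K W] {a b c : W} (h : LinearIndependent K ![a - b, a - c]) :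
    finrank K ↥(K ∙ (a - b) ⊔ K ∙ (a - c) ⊔ K ∙ (b - c)) = 2 := by
  have hbc : K ∙ (b - c) ≤ K ∙ (a - b) ⊔ K ∙ (a - c) := by
    rw [span_singleton_le_iff_mem, ← sub_sub_sub_cancel_left c b a]
    exact sub_mem (mem_sup_right (mem_span_singleton_self _))
      (mem_sup_left (mem_span_singleton_self _))
  rw [sup_eq_left.2 hbc, ← span_insert, ← Matrix.range_cons_cons_empty _ _ ![],
    finrank_span_eq_card h, Fintype.card_fin]

lemma linearIndependent_sub_sub {ι R : Type*} [Ring R] [NoZeroDivisors R] {a b c : ι → R}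
    {i j : ι} (hai : a i = 0) (hbi : b i ≠ 0) (hci : c i = 0)
    (haj : a j = 0) (hbj : b j = 0) (hcj : c j ≠ 0) :
    LinearIndependent R ![a - b, a - c] := by
  refine LinearIndependent.pair_iff.2 fun x y hxy => ⟨?_, ?_⟩
  · simpa [hai, hbi, hci] using congrFun hxy i
  · simpa [haj, hbj, hcj] using congrFun hxy j

end Triangle

section Discriminantal

variable {ι V : Type*} [Fintype ι] [AddCommGroup V] [Module ℂ V] {l : ι → Dual ℂ V}

theorem map_dotProductEquiv_relationsOn [DecidableEq ι] (l : ι → Dual ℂ V) (J : Finset ι) :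
    (relationsOn l J).map (dotProductEquiv ℂ ι).toLinearMap = (DD l J).dualAnnihilator := by
  ext φ
  obtain ⟨c, rfl⟩ := (dotProductEquiv ℂ ι).surjective φ
  rw [mem_map_equiv, LinearEquiv.symm_apply_apply, mem_relationsOn, mem_dualAnnihilator]
  constructor
  · rintro ⟨hsum, hoff⟩ x ⟨y, hy⟩
    calc ∑ i, c i * x i = ∑ i, c i * l i y := Finset.sum_congr rfl fun i _ => by
          by_cases hi : i ∈ J
          · rw [hy i hi]
          · rw [hoff i hi, zero_mul, zero_mul]
      _ = (∑ i, c i • l i) y := by simp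
      _ = 0 := by rw [hsum, LinearMap.zero_apply]
  · refine fun h => ⟨LinearMap.ext fun y => ?_, fun i hi => ?_⟩
    · simpa [dotProduct] using h (fun i => l i y) ⟨y, fun _ _ => rfl⟩
    · simpa using h (Pi.single i 1) ⟨0, fun j hj => by simp [ne_of_mem_of_not_mem hj hi]⟩

theorem finrank_inf_DD_add_finrank_sup_relationsOn (l : ι → Dual ℂ V) (I J L : Finset ι) :
    finrank ℂ ↥(DD l I ⊓ DD l J ⊓ DD l L) +
      finrank ℂ ↥(relationsOn l I ⊔ relationsOn l J ⊔ relationsOn l L : Submodule ℂ (ι → ℂ)) =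
      Fintype.card ι := by
  classical
  rw [← LinearEquiv.finrank_map_eq (dotProductEquiv ℂ ι) (_ ⊔ _), Submodule.map_sup,
    Submodule.map_sup, map_dotProductEquiv_relationsOn, map_dotProductEquiv_relationsOn,
    map_dotProductEquiv_relationsOn, ← Subspace.dualAnnihilator_inf_eq,
    ← Subspace.dualAnnihilator_inf_eq, Subspace.finrank_add_finrank_dualAnnihilator_eq,
    finrank_fintype_fun_eq_card]

theorem finrank_inf_DD_union_add_two [DecidableEq ι] {k : ℕ} {T I J L : Finset ι} {f : Dual ℂ V}
    (hgen : ∀ S : Finset ι, S.card = k → LinearIndepOn ℂ l (S : Set ι))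
    (hIJ : I ∩ J = T) (hIL : I ∩ L = T) (hJL : J ∩ L = T)
    (hIJcard : (I ∪ J).card = k + 1) (hILcard : (I ∪ L).card = k + 1)
    (hJLcard : (J ∪ L).card = k + 1)
    (hfT : ¬ ⨅ i ∈ T, LinearMap.ker (l i) ≤ LinearMap.ker f)
    (hfI : ⨅ i ∈ I, LinearMap.ker (l i) ≤ LinearMap.ker f)
    (hfJ : ⨅ i ∈ J, LinearMap.ker (l i) ≤ LinearMap.ker f)
    (hfL : ⨅ i ∈ L, LinearMap.ker (l i) ≤ LinearMap.ker f) :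
    finrank ℂ ↥(DD l (I ∪ J) ⊓ DD l (I ∪ L) ⊓ DD l (J ∪ L)) + 2 = Fintype.card ι := by
  obtain ⟨a, ha, haf⟩ := exists_sum_smul_eq_of_iInf_ker_le_ker hfI
  obtain ⟨b, hb, hbf⟩ := exists_sum_smul_eq_of_iInf_ker_le_ker hfJ
  obtain ⟨c, hc, hcf⟩ := exists_sum_smul_eq_of_iInf_ker_le_ker hfL
  obtain ⟨p, hpT, hap⟩ := exists_notMem_ne_zero_of_not_iInf_ker_le_ker (haf ▸ hfT)
  obtain ⟨q, hqT, hbq⟩ := exists_notMem_ne_zero_of_not_iInf_ker_le_ker (hbf ▸ hfT)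
  obtain ⟨r, hrT, hcr⟩ := exists_notMem_ne_zero_of_not_iInf_ker_le_ker (hcf ▸ hfT)
  have hp : p ∈ I ∧ p ∉ J ∧ p ∉ L := by grind
  have hq : q ∉ I ∧ q ∈ J ∧ q ∉ L := by grind
  have hr : r ∉ I ∧ r ∉ J ∧ r ∈ L := by grind
  have hli : LinearIndependent ℂ ![a - b, a - c] :=
    linearIndependent_sub_sub (ha q hq.1) hbq (hc q hq.2.2) (ha r hr.1) (hb r hr.2.1) hcr
  have hindep {S : Finset ι} {i : ι} (hS : S.card = k + 1) (hi : i ∈ S) :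
      LinearIndepOn ℂ l (S.erase i : Set ι) :=
    hgen _ (by rw [Finset.card_erase_of_mem hi, hS, Nat.add_sub_cancel])
  have hrelIJ : relationsOn l (I ∪ J) = ℂ ∙ (a - b) :=
    relationsOn_union_eq_span_sub ha hb (haf.trans hbf.symm) hap hp.2.1
      (hindep hIJcard (Finset.mem_union_left _ hp.1))
  have hrelIL : relationsOn l (I ∪ L) = ℂ ∙ (a - c) :=
    relationsOn_union_eq_span_sub ha hc (haf.trans hcf.symm) hap hp.2.2
      (hindep hILcard (Finset.mem_union_left _ hp.1))
  have hrelJL : relationsOn l (J ∪ L) = ℂ ∙ (b - c) :=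
    relationsOn_union_eq_span_sub hb hc (hbf.trans hcf.symm) hbq hq.2.2
      (hindep hJLcard (Finset.mem_union_left _ hq.2.1))
  rw [← finrank_inf_DD_add_finrank_sup_relationsOn l (I ∪ J) (I ∪ L) (J ∪ L), hrelIJ, hrelIL,
    hrelJL, finrank_span_sub_sup_span_sub_sup_span_sub hli]

end Discriminantal

lemma card_union_union_union_of_disjoint {α : Type*} [DecidableEq α] {T X Y : Finset α}
    (hTX : Disjoint T X) (hTY : Disjoint T Y) (hXY : Disjoint X Y) :
    (T ∪ X ∪ (T ∪ Y)).card = T.card + X.card + Y.card := by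
  rw [← Finset.union_union_distrib_left,
    Finset.card_union_of_disjoint (Finset.disjoint_union_right.2 ⟨hTX, hTY⟩),
    Finset.card_union_of_disjoint hXY, add_assoc]

lemma union_inter_union_of_disjoint {α : Type*} [DecidableEq α] {T X Y : Finset α}
    (hXY : Disjoint X Y) : (T ∪ X) ∩ (T ∪ Y) = T := by
  rw [← Finset.union_inter_distrib_left, Finset.disjoint_iff_inter_eq_empty.1 hXY,
    Finset.union_empty]

theorem stmt4_general {ι V : Type*} [Fintype ι] [DecidableEq ι] [AddCommGroup V] [Module ℂ V]
    {s k : ℕ} (hs : 2 ≤ s) {l : ι → Dual ℂ V}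
    (hgen : ∀ S : Finset ι, S.card = k → LinearIndepOn ℂ l (S : Set ι))
    {T A B C : Finset ι} (hk : T.card + 2 * s = k + 1)
    (hA : A.card = s) (hB : B.card = s) (hC : C.card = s)
    (hAB : Disjoint A B) (hAC : Disjoint A C) (hBC : Disjoint B C) (hT : Disjoint T (A ∪ B ∪ C))
    {E : Submodule ℂ V} (hE : E = ⨅ i ∈ T, LinearMap.ker (l i))
    (hdep : (⨅ r ∈ A, LinearMap.ker ((l r).domRestrict E)) ⊔
      (⨅ r ∈ B, LinearMap.ker ((l r).domRestrict E)) ⊔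
      (⨅ r ∈ C, LinearMap.ker ((l r).domRestrict E)) ≠ ⊤) :
    ∃ K₁ K₂ K₃ : Finset ι,
      K₁ ≠ K₂ ∧ K₁ ≠ K₃ ∧ K₂ ≠ K₃ ∧
      K₁.card = k + 1 ∧ K₂.card = k + 1 ∧ K₃.card = k + 1 ∧
      k + 3 ≤ (K₁ ∪ K₂ ∪ K₃).card ∧
      finrank ℂ ↥(DD l K₁ ⊓ DD l K₂ ⊓ DD l K₃) = Fintype.card ι - 2 := by
  obtain ⟨f, hfT, hfA, hfB, hfC⟩ := exists_dual_of_sup_iInf_ker_domRestrict_ne_top hE hdep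
  simp only [Finset.disjoint_union_right] at hT
  obtain ⟨⟨hTA, hTB⟩, hTC⟩ := hT
  have hK₁ : (T ∪ A ∪ (T ∪ B)).card = k + 1 := by
    rw [card_union_union_union_of_disjoint hTA hTB hAB]; omega
  have hK₂ : (T ∪ A ∪ (T ∪ C)).card = k + 1 := by
    rw [card_union_union_union_of_disjoint hTA hTC hAC]; omega
  have hK₃ : (T ∪ B ∪ (T ∪ C)).card = k + 1 := by
    rw [card_union_union_union_of_disjoint hTB hTC hBC]; omega
  have hunion : (T ∪ A ∪ (T ∪ B) ∪ (T ∪ A ∪ (T ∪ C)) ∪ (T ∪ B ∪ (T ∪ C))).card = k + 1 + s := by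
    have hABC : T ∪ A ∪ (T ∪ B) ∪ (T ∪ A ∪ (T ∪ C)) ∪ (T ∪ B ∪ (T ∪ C)) =
        T ∪ A ∪ (T ∪ B) ∪ C := by grind
    rw [hABC, Finset.card_union_of_disjoint (by simp [*]), hK₁, hC]
  have hfinrank := finrank_inf_DD_union_add_two hgen (union_inter_union_of_disjoint hAB)
    (union_inter_union_of_disjoint hAC) (union_inter_union_of_disjoint hBC) hK₁ hK₂ hK₃
    hfT hfA hfB hfC
  obtain ⟨x, hx⟩ : A.Nonempty := Finset.card_pos.1 (by omega)
  obtain ⟨y, hy⟩ : B.Nonempty := Finset.card_pos.1 (by omega)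
  rw [Finset.disjoint_left] at hAB hAC hBC hTA hTB
  have hK₁₂ : T ∪ A ∪ (T ∪ B) ≠ T ∪ A ∪ (T ∪ C) :=
    ne_of_mem_of_not_mem' (a := y) (by grind) (by grind)
  have hK₁₃ : T ∪ A ∪ (T ∪ B) ≠ T ∪ B ∪ (T ∪ C) :=
    ne_of_mem_of_not_mem' (a := x) (by grind) (by grind)
  have hK₂₃ : T ∪ A ∪ (T ∪ C) ≠ T ∪ B ∪ (T ∪ C) :=
    ne_of_mem_of_not_mem' (a := x) (by grind) (by grind)
  exact ⟨_, _, _, hK₁₂, hK₁₃, hK₂₃, hK₁, hK₂, hK₃, by omega, by omega⟩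

/-- Lemma `lem:rest`: if for some `t`-element set `T` the restrictions of the
remaining `3s` functionals to `E = ⋂_{i ∈ T} ker l_i` form a dependent collection (i.e. the
complement of `T` can be partitioned into three `s`-element groups whose corresponding
kernel-intersections in `E` span a proper subspace of `E`), then the discriminantal arrangement
`B(n, k)`, `n = 3s + t`, `k = 2s - 1 + t`, admits a codimension-2 stratum of multiplicity 3. -/
theorem stmt4 (s t : ℕ) (hs : 2 ≤ s)
    (l : Fin (3 * s + t) → Module.Dual ℂ (Fin (2 * s + t - 1) → ℂ))
    (hgen : ∀ S : Finset (Fin (3 * s + t)), S.card = 2 * s + t - 1 →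
      LinearIndependent ℂ (fun i : S => l i.1))
    (T : Finset (Fin (3 * s + t))) (hT : T.card = t)
    (E : Submodule ℂ (Fin (2 * s + t - 1) → ℂ)) (hE : E = ⨅ i ∈ T, LinearMap.ker (l i))
    (hdep : ∃ A B C : Finset (Fin (3 * s + t)),
      A.card = s ∧ B.card = s ∧ C.card = s ∧
      Disjoint A B ∧ Disjoint A C ∧ Disjoint B C ∧
      A ∪ B ∪ C = Tᶜ ∧
      (⨅ r ∈ A, LinearMap.ker ((l r).domRestrict E)) ⊔
        (⨅ r ∈ B, LinearMap.ker ((l r).domRestrict E)) ⊔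
        (⨅ r ∈ C, LinearMap.ker ((l r).domRestrict E)) ≠ ⊤) :
    ∃ K₁ K₂ K₃ : Finset (Fin (3 * s + t)),
      K₁ ≠ K₂ ∧ K₁ ≠ K₃ ∧ K₂ ≠ K₃ ∧
      K₁.card = (2 * s + t - 1) + 1 ∧ K₂.card = (2 * s + t - 1) + 1 ∧
      K₃.card = (2 * s + t - 1) + 1 ∧
      (2 * s + t - 1) + 3 ≤ (K₁ ∪ K₂ ∪ K₃).card ∧
      Module.finrank ℂ ↥(DD l K₁ ⊓ DD l K₂ ⊓ DD l K₃) = 3 * s + t - 2 := by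
  obtain ⟨A, B, C, hA, hB, hC, hAB, hAC, hBC, hU, hne⟩ := hdep
  have hT' : Disjoint T (A ∪ B ∪ C) := hU ▸ disjoint_compl_right
  simpa using stmt4_general hs hgen (by omega) hA hB hC hAB hAC hBC hT' hE hne
end

section
/- Assume 2n > 3(k + 1) and suppose the discriminantal arrangement B(n, k) admits a codimension-2 stratum of multiplicity 3, i.e. there are three pairwise distinct (k+1)-element subsets K_1, K_2, K_3 of {1, …, n} with |K_1 ∪ K_2 ∪ K_3| ≥ k + 3 such that D_{K_1} ∩ D_{K_2} ∩ D_{K_3} has codimension 2. Then there exists a proper subset S ⊊ {1, …, n} such that the discriminantal arrangement of the subfamily (l_i)_{i∈S} (defined in ℂ^S) also admits a codimension-2 stratum of multiplicity 3. -/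
/-!
The unit vector `e i` lies in `D_J` when `i ∉ J`, but by genericity it does not lie in `D_K` when
`i ∈ K` and `|K| = k + 1`. So if some `i` belonged to `K₁` only, the chain `D_{K₁} ∩ D_{K₂} ∩
D_{K₃} < D_{K₂} ∩ D_{K₃} < D_{K₂} < ⊤` would be strict, and the codimension would be at least `3`.
Hence in a codimension-2 stratum each element of `K₁ ∪ K₂ ∪ K₃` belongs to at least two of the
`Kᵢ`, which gives `2 |K₁ ∪ K₂ ∪ K₃| ≤ 3 (k + 1)`. The conditions defining `D_J` only involve the
coordinates in `J`, so the stratum already occurs in the subfamily indexed by `K₁ ∪ K₂ ∪ K₃`.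
-/

open Module Submodule

section Codimension

variable {R K M N : Type*} [Ring R] [DivisionRing K] [AddCommGroup M] [AddCommGroup N]

theorem finrank_quotient_comap [Module R M] [Module R N] {f : M →ₗ[R] N}
    (hf : Function.Surjective f) (p : Submodule R N) :
    finrank R (M ⧸ p.comap f) = finrank R (N ⧸ p) := by
  have hker : p.comap f = LinearMap.ker (p.mkQ ∘ₗ f) := by rw [LinearMap.ker_comp, ker_mkQ]
  rw [hker]
  exact ((p.mkQ ∘ₗ f).quotKerEquivOfSurjective (p.mkQ_surjective.comp hf)).finrank_eq

theorem finrank_quotient_lt_finrank_quotient [Module K M] {p q : Submodule K M}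
    [Module.Finite K (M ⧸ p)] (hpq : p < q) : finrank K (M ⧸ q) < finrank K (M ⧸ p) := by
  have hmap : q.map p.mkQ ≠ ⊥ := by
    rw [Ne, ← LinearMap.le_ker_iff_map, ker_mkQ]
    exact hpq.not_ge
  have hadd := (q.map p.mkQ).finrank_quotient_add_finrank
  have hpos := Submodule.one_le_finrank_iff.mpr hmap
  rw [(quotientQuotientEquivQuotient p q hpq.le).finrank_eq] at hadd
  omega

theorem three_le_finrank_quotient_of_lt_of_lt_of_lt_top [Module K M] {p q r : Submodule K M}
    [Module.Finite K (M ⧸ p)] (hpq : p < q) (hqr : q < r) (hr : r < ⊤) : 3 ≤ finrank K (M ⧸ p) := by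
  have : Module.Finite K (M ⧸ q) := .of_surjective _ (factor_surjective hpq.le)
  have : Module.Finite K (M ⧸ r) := .of_surjective _ (factor_surjective hqr.le)
  have hdim_p := finrank_quotient_lt_finrank_quotient hpq
  have hdim_q := finrank_quotient_lt_finrank_quotient hqr
  have hdim_r := finrank_quotient_lt_finrank_quotient hr
  omega

end Codimension

theorem two_mul_card_union_le {α : Type*} [DecidableEq α] {A B C : Finset α}
    (hA : A ⊆ B ∪ C) (hB : B ⊆ C ∪ A) (hC : C ⊆ A ∪ B) :
    2 * (A ∪ B ∪ C).card ≤ A.card + B.card + C.card := by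
  have hunion : A ∪ B ∪ C = B ∪ C := by grind
  have hinter : A ∪ B ∪ C = A ∪ (B ∩ C) := by grind
  calc 2 * (A ∪ B ∪ C).card = (B ∪ C).card + (A ∪ (B ∩ C)).card := by
        rw [two_mul, ← hinter, ← hunion]
    _ ≤ (B ∪ C).card + (A.card + (B ∩ C).card) := by gcongr; exact Finset.card_union_le _ _
    _ = A.card + B.card + C.card := by
        have := Finset.card_union_add_card_inter B C
        omega

section Discriminantal

variable {ι κ V : Type*} [AddCommGroup V] [Module ℂ V] {l : ι → Module.Dual ℂ V}

theorem DD_map (f : κ ↪ ι) (J : Finset κ) :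
    DD l (J.map f) = (DD (l ∘ f) J).comap (LinearMap.funLeft ℂ ℂ f) := by
  ext x
  simp [DD]

variable [DecidableEq ι]

theorem single_mem_DD {J : Finset ι} {i : ι} (hi : i ∉ J) : Pi.single i 1 ∈ DD l J :=
  ⟨0, fun j hj => by rw [Pi.single_eq_of_ne (ne_of_mem_of_not_mem hj hi), map_zero]⟩

theorem single_notMem_DD {J : Finset ι} {i : ι} (hi : i ∈ J)
    (hspan : l i ∈ span ℂ (l '' (J.erase i))) : Pi.single i 1 ∉ DD l J := by
  rintro ⟨y, hy⟩
  have hle : span ℂ (l '' (J.erase i)) ≤ LinearMap.ker (Module.Dual.eval ℂ V y) := by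
    rw [span_le]
    rintro _ ⟨j, hj, rfl⟩
    obtain ⟨hji, hjJ⟩ := Finset.mem_erase.mp hj
    exact (hy j hjJ).symm.trans (Pi.single_eq_of_ne hji 1)
  have hzero : l i y = 0 := hle hspan
  simpa [hzero] using hy i hi

theorem single_notMem_DD_of_card_eq {k : ℕ}
    (hspan : ∀ S : Finset ι, S.card = k → span ℂ (l '' S) = ⊤) {J : Finset ι}
    (hJ : J.card = k + 1) {i : ι} (hi : i ∈ J) : Pi.single i 1 ∉ DD l J := by
  have hcard : (J.erase i).card = k := by rw [Finset.card_erase_of_mem hi, hJ, Nat.add_sub_cancel]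
  exact single_notMem_DD hi (hspan _ hcard ▸ mem_top)

/-- A codimension-2 stratum of multiplicity 3 of the discriminantal arrangement of `l`, a family of
functionals on a `k`-dimensional space, given by the three hyperplanes `D_{Kᵢ}` containing it. The
codimension is the dimension of the quotient, so that `ι` may be infinite. -/
def IsTripleStratum (k : ℕ) (l : ι → Module.Dual ℂ V) (K₁ K₂ K₃ : Finset ι) : Prop :=
  K₁ ≠ K₂ ∧ K₁ ≠ K₃ ∧ K₂ ≠ K₃ ∧
  K₁.card = k + 1 ∧ K₂.card = k + 1 ∧ K₃.card = k + 1 ∧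
  k + 3 ≤ (K₁ ∪ K₂ ∪ K₃).card ∧
  finrank ℂ ((ι → ℂ) ⧸ (DD l K₁ ⊓ DD l K₂ ⊓ DD l K₃)) = 2

variable {k : ℕ} {K₁ K₂ K₃ : Finset ι}

theorem isTripleStratum_iff_finrank_eq [Fintype ι] {m : ℕ} (hm : Fintype.card ι = m) :
    IsTripleStratum k l K₁ K₂ K₃ ↔
      K₁ ≠ K₂ ∧ K₁ ≠ K₃ ∧ K₂ ≠ K₃ ∧
      K₁.card = k + 1 ∧ K₂.card = k + 1 ∧ K₃.card = k + 1 ∧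
      k + 3 ≤ (K₁ ∪ K₂ ∪ K₃).card ∧
      finrank ℂ ↥(DD l K₁ ⊓ DD l K₂ ⊓ DD l K₃) = m - 2 := by
  have hcodim := (DD l K₁ ⊓ DD l K₂ ⊓ DD l K₃).finrank_quotient_add_finrank
  rw [finrank_fintype_fun_eq_card, hm] at hcodim
  have hle : (K₁ ∪ K₂ ∪ K₃).card ≤ m := hm ▸ Finset.card_le_univ _
  simp only [IsTripleStratum]
  refine and_congr_right' <| and_congr_right' <| and_congr_right' <| and_congr_right' <|
    and_congr_right' <| and_congr_right' <| and_congr_right fun hunion => ?_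
  -- `hunion` and `hle` give `3 ≤ m`, so `m - 2` is not truncated.
  omega

theorem isTripleStratum_map [DecidableEq κ] (f : κ ↪ ι) {K₁ K₂ K₃ : Finset κ} :
    IsTripleStratum k l (K₁.map f) (K₂.map f) (K₃.map f) ↔
      IsTripleStratum k (l ∘ f) K₁ K₂ K₃ := by
  have hsurj : Function.Surjective (LinearMap.funLeft ℂ ℂ f) :=
    LinearMap.funLeft_surjective_of_injective ℂ ℂ f f.injective
  have hcodim := finrank_quotient_comap hsurj (DD (l ∘ f) K₁ ⊓ DD (l ∘ f) K₂ ⊓ DD (l ∘ f) K₃)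
  rw [comap_inf, comap_inf, ← DD_map, ← DD_map, ← DD_map] at hcodim
  simp only [IsTripleStratum, ne_eq, Finset.map_inj, Finset.card_map, ← Finset.map_union, hcodim]

namespace IsTripleStratum

theorem rotate (h : IsTripleStratum k l K₁ K₂ K₃) : IsTripleStratum k l K₂ K₃ K₁ := by
  obtain ⟨h₁₂, h₁₃, h₂₃, hK₁, hK₂, hK₃, hunion, hcodim⟩ := h
  refine ⟨h₂₃, h₁₂.symm, h₁₃.symm, hK₂, hK₃, hK₁, ?_, ?_⟩
  · rwa [Finset.union_comm, ← Finset.union_assoc]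
  · rwa [inf_comm, ← inf_assoc]

theorem restrict (h : IsTripleStratum k l K₁ K₂ K₃) {S : Finset ι} (hS : K₁ ∪ K₂ ∪ K₃ ⊆ S) :
    IsTripleStratum k (fun i : S => l i) (K₁.subtype (· ∈ S)) (K₂.subtype (· ∈ S))
      (K₃.subtype (· ∈ S)) := by
  have hmap : ∀ {K}, K ⊆ K₁ ∪ K₂ ∪ K₃ →
      (K.subtype (· ∈ S)).map (Function.Embedding.subtype _) = K :=
    fun hK => Finset.subtype_map_of_mem fun _ hi => hS (hK hi)
  refine (isTripleStratum_map (Function.Embedding.subtype (· ∈ S))).mp ?_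
  rwa [hmap (by grind), hmap (by grind), hmap (by grind)]

theorem subset_union (hspan : ∀ S : Finset ι, S.card = k → span ℂ (l '' S) = ⊤)
    (h : IsTripleStratum k l K₁ K₂ K₃) : K₁ ⊆ K₂ ∪ K₃ := by
  obtain ⟨-, -, h₂₃, hK₁, hK₂, hK₃, -, hcodim⟩ := h
  intro i hi₁
  by_contra hi
  obtain ⟨hi₂, hi₃⟩ := not_or.mp (Finset.mem_union.not.mp hi)
  obtain ⟨j, hj₃, hj₂⟩ : ∃ j ∈ K₃, j ∉ K₂ :=
    Finset.not_subset.mp fun hsub => h₂₃ (Finset.eq_of_subset_of_card_le hsub (by omega)).symm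
  obtain ⟨m, hm₂⟩ : K₂.Nonempty := Finset.card_pos.mp (by omega)
  have h₁ : DD l K₁ ⊓ DD l K₂ ⊓ DD l K₃ < DD l K₂ ⊓ DD l K₃ := by
    rw [inf_assoc]
    exact inf_lt_right.mpr fun hle => single_notMem_DD_of_card_eq hspan hK₁ hi₁
      (hle ⟨single_mem_DD hi₂, single_mem_DD hi₃⟩)
  have h₂ : DD l K₂ ⊓ DD l K₃ < DD l K₂ :=
    inf_lt_left.mpr fun hle => single_notMem_DD_of_card_eq hspan hK₃ hj₃ (hle (single_mem_DD hj₂))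
  have h₃ : DD l K₂ < ⊤ := lt_top_iff_ne_top.mpr fun htop =>
    single_notMem_DD_of_card_eq hspan hK₂ hm₂ (htop ▸ mem_top)
  have : Module.Finite ℂ ((ι → ℂ) ⧸ (DD l K₁ ⊓ DD l K₂ ⊓ DD l K₃)) :=
    FiniteDimensional.of_finrank_pos (by omega)
  have hthree := three_le_finrank_quotient_of_lt_of_lt_of_lt_top h₁ h₂ h₃
  omega

theorem two_mul_card_le (hspan : ∀ S : Finset ι, S.card = k → span ℂ (l '' S) = ⊤)
    (h : IsTripleStratum k l K₁ K₂ K₃) : 2 * (K₁ ∪ K₂ ∪ K₃).card ≤ 3 * (k + 1) := by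
  have hle := two_mul_card_union_le (h.subset_union hspan) (h.rotate.subset_union hspan)
    (h.rotate.rotate.subset_union hspan)
  obtain ⟨-, -, -, hK₁, hK₂, hK₃, -, -⟩ := h
  omega

end IsTripleStratum

end Discriminantal

theorem stmt10_general {ι V : Type*} [DecidableEq ι] [AddCommGroup V] [Module ℂ V]
    [FiniteDimensional ℂ V] {k : ℕ} (hk : finrank ℂ V = k) {l : ι → Module.Dual ℂ V}
    (hgen : ∀ S : Finset ι, S.card = k → LinearIndependent ℂ (fun i : S => l i.1))
    (hmult3 : ∃ K₁ K₂ K₃ : Finset ι, IsTripleStratum k l K₁ K₂ K₃) :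
    ∃ S : Finset ι, 2 * S.card ≤ 3 * (k + 1) ∧
      ∃ K₁ K₂ K₃ : Finset ↥S, IsTripleStratum k (fun i : ↥S => l i.1) K₁ K₂ K₃ := by
  have hspan : ∀ S : Finset ι, S.card = k → span ℂ (l '' S) = ⊤ := by
    intro S hS
    rw [Set.image_eq_range]
    refine (hgen S hS).span_eq_top_of_card_eq_finrank' ?_
    rw [Fintype.card_coe, hS, Subspace.dual_finrank_eq, hk]
  obtain ⟨K₁, K₂, K₃, h⟩ := hmult3
  exact ⟨K₁ ∪ K₂ ∪ K₃, h.two_mul_card_le hspan, _, _, _, h.restrict subset_rfl⟩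

/-- if `2n > 3(k+1)` and `B(n,k)` admits a codimension-2 stratum of
multiplicity 3, then some proper subfamily `(l i)_{i ∈ S}`, `S ⊊ {1,…,n}`, has a
discriminantal arrangement (in `ℂ^S`) admitting a codimension-2 stratum of multiplicity 3. -/
theorem stmt10 (k n : ℕ) (hk : 0 < k) (hkn : k < n) (hbig : 3 * (k + 1) < 2 * n)
    (l : Fin n → Module.Dual ℂ (Fin k → ℂ))
    (hgen : ∀ S : Finset (Fin n), S.card = k → LinearIndependent ℂ (fun i : S => l i.1))
    (hmult3 : ∃ K₁ K₂ K₃ : Finset (Fin n),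
      K₁ ≠ K₂ ∧ K₁ ≠ K₃ ∧ K₂ ≠ K₃ ∧
      K₁.card = k + 1 ∧ K₂.card = k + 1 ∧ K₃.card = k + 1 ∧
      k + 3 ≤ (K₁ ∪ K₂ ∪ K₃).card ∧
      Module.finrank ℂ ↥(DD l K₁ ⊓ DD l K₂ ⊓ DD l K₃) = n - 2) :
    ∃ S : Finset (Fin n), S ≠ Finset.univ ∧
      ∃ K₁ K₂ K₃ : Finset ↥S,
        K₁ ≠ K₂ ∧ K₁ ≠ K₃ ∧ K₂ ≠ K₃ ∧
        K₁.card = k + 1 ∧ K₂.card = k + 1 ∧ K₃.card = k + 1 ∧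
        k + 3 ≤ (K₁ ∪ K₂ ∪ K₃).card ∧
        Module.finrank ℂ
          ↥(DD (fun i : ↥S => l i.1) K₁ ⊓ DD (fun i : ↥S => l i.1) K₂ ⊓
            DD (fun i : ↥S => l i.1) K₃) = S.card - 2 := by
  obtain ⟨K₁, K₂, K₃, h⟩ := hmult3
  obtain ⟨S, hS, L₁, L₂, L₃, hL⟩ := stmt10_general (finrank_fin_fun ℂ) hgen
    ⟨K₁, K₂, K₃, (isTripleStratum_iff_finrank_eq (Fintype.card_fin n)).mpr h⟩
  refine ⟨S, ?_, L₁, L₂, L₃, (isTripleStratum_iff_finrank_eq (Fintype.card_coe S)).mp hL⟩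
  rintro rfl
  rw [Finset.card_fin] at hS
  omega
end

section
/- Let J_1, …, J_p be subsets of {1, …, n}, each of cardinality at least 3, with |J_i ∩ J_j| ≤ 1 for all i ≠ j. Define: C_1 = the set of indices s ∈ {1, …, n} belonging to at least two of the J_i; C_2 = the set of i ∈ {1, …, p} with J_i ∩ J_j = ∅ for all j ≠ i; C_3 = {1, …, n} ∖ (J_1 ∪ … ∪ J_p); Σ = the number of i ∈ {1, …, p} with |J_i ∩ C_1| = 1; and let i_1, …, i_q be the indices i with |J_i ∩ C_1| ≥ 3, with L_t = J_{i_t} ∩ C_1. Then dim(D_{J_1} ∩ … ∩ D_{J_p}) = d + Σ + 2·|C_2| + |C_3|, where d denotes the dimension of ⋂_{t=1}^q D_{L_t} computed inside ℂ^{C_1} (the space of translates of the lines with indices in C_1, with the D_{L_t} defined via the functionals (l_s)_{s∈C_1}), and d = |C_1| when q = 0. -/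
open Module Submodule

/-!
Enlarging one of the index sets by a point that lies in no other of them costs exactly one dimension
once the set already contains `dim V` points, since the common point of its hyperplanes is then
determined, and costs nothing before that. So fix sets `M i` with `J i ∩ C₁ ⊆ M i ⊆ J i` and
`|M i| = max (dim V) |J i ∩ C₁|`. Passing from the `M i` to the `J i` costs `∑ |J i \ M i|`
dimensions. The condition imposed by `M i` is vacuous if `|M i| = dim V`, and otherwise
`M i = J i ∩ C₁`, so the `M i` cut out the preimage, under the coordinate restriction to `C₁`, of
the subspace of dimension `d`. It remains to count points.
-/

open Finset

theorem finrank_comap_add_finrank {K E F : Type*} [DivisionRing K] [AddCommGroup E] [Module K E]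
    [AddCommGroup F] [Module K F] [FiniteDimensional K E] [FiniteDimensional K F]
    {f : E →ₗ[K] F} (hf : Function.Surjective f) (p : Submodule K F) :
    finrank K (p.comap f) + finrank K F = finrank K p + finrank K E := by
  have hker : LinearMap.ker (p.mkQ ∘ₗ f) = p.comap f := by rw [LinearMap.ker_comp, ker_mkQ]
  have hrange : LinearMap.range (p.mkQ ∘ₗ f) = ⊤ :=
    LinearMap.range_eq_top.2 (p.mkQ_surjective.comp hf)
  have hrankNullity := LinearMap.finrank_range_add_finrank_ker (p.mkQ ∘ₗ f)
  rw [hker, hrange, finrank_top] at hrankNullity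
  have hquotient := p.finrank_quotient_add_finrank
  lia

theorem finrank_comap_funLeft_add_card {K ι σ : Type*} [DivisionRing K] [Fintype ι] [Fintype σ]
    {f : σ → ι} (hf : Function.Injective f) (p : Submodule K (σ → K)) :
    finrank K (p.comap (LinearMap.funLeft K K f)) + Fintype.card σ
      = finrank K p + Fintype.card ι := by
  simpa only [finrank_fintype_fun_eq_card] using
    finrank_comap_add_finrank (LinearMap.funLeft_surjective_of_injective K K f hf) p

theorem finrank_map_of_injOn {K E F : Type*} [DivisionRing K] [AddCommGroup E] [Module K E]
    [AddCommGroup F] [Module K F] {f : E →ₗ[K] F} {p : Submodule K E} (hf : Set.InjOn f p) :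
    finrank K (p.map f) = finrank K p := by
  rw [← LinearMap.range_domRestrict]
  exact LinearMap.finrank_range_of_inj hf.injective

theorem sum_two_tsub {κ : Type*} [Fintype κ] (f : κ → ℕ) :
    ∑ i, (2 - f i) = #{i | f i = 1} + 2 * #{i | f i = 0} := by
  simp only [card_filter, mul_sum, ← sum_add_distrib]
  refine sum_congr rfl fun i _ => ?_
  split_ifs <;> lia

section Overlap

variable {ι κ : Type*} [Fintype ι] [DecidableEq ι] [Fintype κ] [DecidableEq κ]

/-- The set of indices lying in at least two members of the family `J`, called `C₁` in the
theorem. -/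
def overlap (J : κ → Finset ι) : Finset ι := {s | ∃ i j, i ≠ j ∧ s ∈ J i ∧ s ∈ J j}

variable {J : κ → Finset ι}

theorem mem_overlap {s : ι} : s ∈ overlap J ↔ ∃ i j, i ≠ j ∧ s ∈ J i ∧ s ∈ J j := by
  simp only [overlap, mem_filter_univ]

theorem disjoint_sdiff_overlap {i j : κ} (hij : i ≠ j) : Disjoint (J i \ overlap J) (J j) :=
  disjoint_left.2 fun _ hi hj =>
    (mem_sdiff.1 hi).2 (mem_overlap.2 ⟨i, j, hij, (mem_sdiff.1 hi).1, hj⟩)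

theorem inter_overlap_eq_empty_iff {i : κ} :
    J i ∩ overlap J = ∅ ↔ ∀ j, j ≠ i → J i ∩ J j = ∅ := by
  simp only [← disjoint_iff_inter_eq_empty, disjoint_left, mem_overlap]
  constructor
  · intro h j hji s hsi hsj
    exact h hsi ⟨i, j, hji.symm, hsi, hsj⟩
  · rintro h s hsi ⟨j, k, hjk, hsj, hsk⟩
    obtain hji | hki : j ≠ i ∨ k ≠ i := by grind
    exacts [h j hji hsi hsj, h k hki hsi hsk]

theorem card_compl_overlap (J : κ → Finset ι) :
    #(overlap J)ᶜ = ∑ i, #(J i \ overlap J) + #{s | ∀ i, s ∉ J i} := by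
  have hunion : (overlap J)ᶜ
      = univ.biUnion (fun i => J i \ overlap J) ∪ ({s | ∀ i, s ∉ J i} : Finset ι) := by
    ext s
    simp only [mem_compl, mem_union, mem_biUnion, mem_univ, true_and, mem_sdiff, mem_filter_univ]
    grind [mem_overlap]
  rw [hunion, card_union_of_disjoint, card_biUnion]
  · exact fun i _ j _ hij => (disjoint_sdiff_overlap hij).mono_right sdiff_subset
  · simp only [disjoint_left, mem_biUnion, mem_sdiff, mem_filter_univ]
    grind

theorem sum_two_tsub_card_inter_overlap (J : κ → Finset ι) :
    ∑ i, (2 - #(J i ∩ overlap J))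
      = #{i | #(J i ∩ overlap J) = 1} + 2 * #{i | ∀ j, j ≠ i → J i ∩ J j = ∅} := by
  simp only [sum_two_tsub, card_eq_zero, inter_overlap_eq_empty_iff]

end Overlap

variable {ι κ V : Type*} [AddCommGroup V] [Module ℂ V] {l : ι → Dual ℂ V}

theorem mem_iInf_DD {J : κ → Finset ι} {x : ι → ℂ} :
    x ∈ ⨅ i, DD l (J i) ↔ ∀ i, ∃ y, ∀ s ∈ J i, x s = l s y :=
  mem_iInf _

theorem comap_funLeft_DD {σ : Type*} (f : σ ↪ ι) (S : Finset σ) :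
    (DD (fun s => l (f s)) S).comap (LinearMap.funLeft ℂ ℂ f) = DD l (S.map f) := by
  ext x
  simp only [DD, mem_comap, Submodule.mem_mk, AddSubmonoid.mem_mk, AddSubsemigroup.mem_mk,
    Set.mem_ofPred_eq, LinearMap.funLeft_apply, forall_mem_map]

theorem finrank_biInf_DD_add_card [Fintype ι] [DecidableEq ι] (l : ι → Dual ℂ V)
    {C : Finset ι} (Q : Finset κ) {S : κ → Finset ι} (hS : ∀ i, S i ⊆ C) :
    finrank ℂ ↥(⨅ i ∈ Q, DD l (S i)) + #C
      = finrank ℂ ↥(⨅ i ∈ Q, DD (fun s : C => l s) ((S i).subtype (· ∈ C)))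
        + Fintype.card ι := by
  have hcomap : ⨅ i ∈ Q, DD l (S i)
      = (⨅ i ∈ Q, DD (fun s : C => l s) ((S i).subtype (· ∈ C))).comap
        (LinearMap.funLeft ℂ ℂ (↑)) := by
    simp only [Submodule.comap_iInf]
    refine iInf_congr fun i => iInf_congr fun _ => ?_
    have hrestrict := comap_funLeft_DD (l := l) (.subtype (· ∈ C)) ((S i).subtype (· ∈ C))
    rw [subtype_map_of_mem (hS i)] at hrestrict
    exact hrestrict.symm
  rw [hcomap, ← finrank_comap_funLeft_add_card Subtype.val_injective, Fintype.card_coe]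

theorem notMem_sdiff_of_mem [DecidableEq ι] {M J : κ → Finset ι} (hMJ : ∀ i, M i ⊆ J i)
    (hdisj : ∀ i j, i ≠ j → Disjoint (J i \ M i) (J j)) {i : κ} {s : ι} (hs : s ∈ M i) (j : κ) :
    s ∉ J j \ M j := by
  intro hsj
  obtain rfl | hji := eq_or_ne j i
  · exact (mem_sdiff.1 hsj).2 hs
  · exact disjoint_left.1 (hdisj j i hji) hsj (hMJ i hs)

theorem exists_mem_iInf_DD_eqOn [DecidableEq ι] {M J : κ → Finset ι}
    (hdisj : ∀ i j, i ≠ j → Disjoint (J i \ M i) (J j)) {x : ι → ℂ} (hx : x ∈ ⨅ i, DD l (M i)) :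
    ∃ x' ∈ ⨅ i, DD l (J i), ∀ s, (∀ i, s ∉ J i \ M i) → x' s = x s := by
  choose y hy using mem_iInf_DD.1 hx
  have hvalue (s : ι) :
      ∃ v, (∀ i, s ∈ J i → v = l s (y i)) ∧ ((∀ i, s ∉ J i \ M i) → v = x s) := by
    by_cases hs : ∃ i, s ∈ J i \ M i
    · obtain ⟨i, hi⟩ := hs
      refine ⟨l s (y i), fun j hj => ?_, fun h => absurd hi (h i)⟩
      have hij : i = j := by_contra fun hne => disjoint_left.1 (hdisj i j hne) hi hj
      rw [hij]
    · push Not at hs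
      refine ⟨x s, fun i hi => hy i s ?_, fun _ => rfl⟩
      by_contra hsM
      exact hs i (mem_sdiff.2 ⟨hi, hsM⟩)
  choose x' hx'J hx'x using hvalue
  exact ⟨x', mem_iInf_DD.2 fun i => ⟨y i, fun s hs => hx'J s i hs⟩, hx'x⟩

theorem mem_iInf_DD_iff_exists [DecidableEq ι] {M J : κ → Finset ι} (hMJ : ∀ i, M i ⊆ J i)
    (hdisj : ∀ i j, i ≠ j → Disjoint (J i \ M i) (J j)) {x : ι → ℂ} :
    x ∈ ⨅ i, DD l (M i) ↔
      ∃ x' ∈ ⨅ i, DD l (J i), ∀ s, (∀ i, s ∉ J i \ M i) → x' s = x s := by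
  refine ⟨exists_mem_iInf_DD_eqOn hdisj, ?_⟩
  rintro ⟨x', hx', hxx'⟩
  refine mem_iInf_DD.2 fun i => ?_
  obtain ⟨y, hy⟩ := mem_iInf_DD.1 hx' i
  exact ⟨y, fun s hs =>
    (hxx' s (notMem_sdiff_of_mem hMJ hdisj hs)).symm.trans (hy s (hMJ i hs))⟩

/-- The functionals `l` are in general position: every `dim V` of them are linearly independent.
For `dim V = 2` these are pairwise independent functionals, that is, lines with pairwise distinct
points at infinity. -/
def InGeneralPosition (l : ι → Dual ℂ V) : Prop :=
  ∀ S : Finset ι, #S = finrank ℂ V → LinearIndepOn ℂ l (S : Set ι)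

theorem inGeneralPosition_of_pairwise (hV : finrank ℂ V = 2)
    (h : ∀ i j, i ≠ j → LinearIndependent ℂ ![l i, l j]) : InGeneralPosition l := by
  classical
  intro S hS
  obtain ⟨i, j, hij, rfl⟩ := card_eq_two.1 (hS.trans hV)
  rw [coe_pair, LinearIndepOn.pair_iff l hij]
  exact LinearIndependent.pair_iff.1 (h i j hij)

variable [FiniteDimensional ℂ V]

namespace InGeneralPosition

theorem eq_of_forall_mem_apply_eq (hl : InGeneralPosition l) {S : Finset ι}
    (hS : finrank ℂ V ≤ #S) {y z : V} (h : ∀ s ∈ S, l s y = l s z) : y = z := by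
  obtain ⟨T, hTS, hT⟩ := exists_subset_card_eq hS
  have hspan : span ℂ (Set.range fun s : (T : Set ι) => l s) = ⊤ :=
    (hl T hT).span_eq_top_of_card_eq_finrank' (by simp [hT, Subspace.dual_finrank_eq])
  exact eval_apply_injective ℂ (LinearMap.ext_on_range hspan fun s => h s (hTS s.2))

theorem eqOn_of_mem_DD (hl : InGeneralPosition l) {M S : Finset ι} (hMS : M ⊆ S)
    (hM : finrank ℂ V ≤ #M) {x x' : ι → ℂ} (hx : x ∈ DD l S) (hx' : x' ∈ DD l S)
    (h : Set.EqOn x x' M) : Set.EqOn x x' S := by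
  obtain ⟨y, hy⟩ := hx
  obtain ⟨y', hy'⟩ := hx'
  have hyy' : y = y' := hl.eq_of_forall_mem_apply_eq hM fun s hs => by
    rw [← hy s (hMS hs), ← hy' s (hMS hs), h hs]
  intro s hs
  rw [hy s hs, hy' s hs, hyy']

theorem DD_eq_top (hl : InGeneralPosition l) {S : Finset ι} (hS : #S = finrank ℂ V) :
    DD l S = ⊤ := by
  let ev : V →ₗ[ℂ] S → ℂ := LinearMap.pi fun s => l s
  have hinj : Function.Injective ev := fun y z hyz =>
    hl.eq_of_forall_mem_apply_eq hS.ge fun s hs => congrFun hyz ⟨s, hs⟩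
  have hsurj : Function.Surjective ev :=
    (LinearMap.injective_iff_surjective_of_finrank_eq_finrank (by simp [hS])).1 hinj
  refine eq_top_iff'.2 fun x => ?_
  obtain ⟨y, hy⟩ := hsurj fun s => x s
  exact ⟨y, fun s hs => (congrFun hy ⟨s, hs⟩).symm⟩

theorem iInf_DD_eq_biInf_of_card_eq_max [Fintype κ] (hl : InGeneralPosition l)
    {M S : κ → Finset ι} (hSM : ∀ i, S i ⊆ M i) (hM : ∀ i, #(M i) = max (finrank ℂ V) #(S i)) :
    ⨅ i, DD l (M i) = ⨅ i ∈ ({i | finrank ℂ V < #(S i)} : Finset κ), DD l (S i) := by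
  refine iInf_congr fun i => ?_
  rw [mem_filter_univ]
  by_cases hi : finrank ℂ V < #(S i)
  · rw [iInf_pos hi, eq_of_subset_of_card_le (hSM i) (by rw [hM i, max_eq_right hi.le])]
  · rw [iInf_neg hi, hl.DD_eq_top (by rw [hM i, max_eq_left (not_lt.1 hi)])]

theorem eq_of_mem_iInf_DD [DecidableEq ι] (hl : InGeneralPosition l) {M J : κ → Finset ι}
    (hMJ : ∀ i, M i ⊆ J i) (hM : ∀ i, finrank ℂ V ≤ #(M i))
    (hdisj : ∀ i j, i ≠ j → Disjoint (J i \ M i) (J j)) {x x' : ι → ℂ}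
    (hx : x ∈ ⨅ i, DD l (J i)) (hx' : x' ∈ ⨅ i, DD l (J i))
    (h : ∀ s, (∀ i, s ∉ J i \ M i) → x s = x' s) : x = x' := by
  funext s
  by_cases hs : ∃ i, s ∈ J i \ M i
  · obtain ⟨i, hi⟩ := hs
    exact hl.eqOn_of_mem_DD (hMJ i) (hM i) ((mem_iInf _).1 hx i) ((mem_iInf _).1 hx' i)
      (fun t ht => h t (notMem_sdiff_of_mem hMJ hdisj ht)) (mem_sdiff.1 hi).1
  · exact h s (not_exists.1 hs)

theorem finrank_iInf_DD_add_sum_card_sdiff [Finite ι] [DecidableEq ι] [Fintype κ]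
    (hl : InGeneralPosition l) {M J : κ → Finset ι} (hMJ : ∀ i, M i ⊆ J i)
    (hM : ∀ i, finrank ℂ V ≤ #(M i))
    (hdisj : ∀ i j, i ≠ j → Disjoint (J i \ M i) (J j)) :
    finrank ℂ ↥(⨅ i, DD l (J i)) + ∑ i, #(J i \ M i) = finrank ℂ ↥(⨅ i, DD l (M i)) := by
  cases nonempty_fintype ι
  set R : Finset ι := univ.biUnion fun i => J i \ M i with hR
  have mem_compl_R {s : ι} : s ∈ Rᶜ ↔ ∀ i, s ∉ J i \ M i := by simp [hR]
  let f : (ι → ℂ) →ₗ[ℂ] (↥Rᶜ → ℂ) := LinearMap.funLeft ℂ ℂ (↑)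
  have hf {x x' : ι → ℂ} : f x = f x' ↔ ∀ s, (∀ i, s ∉ J i \ M i) → x s = x' s :=
    ⟨fun h s hs => congrFun h ⟨s, mem_compl_R.2 hs⟩,
      fun h => funext fun s => h s (mem_compl_R.1 s.2)⟩
  have hinj : Set.InjOn f ↑(⨅ i, DD l (J i)) := fun x hx x' hx' hxx' =>
    hl.eq_of_mem_iInf_DD hMJ hM hdisj hx hx' (hf.1 hxx')
  have hcomap : ⨅ i, DD l (M i) = ((⨅ i, DD l (J i)).map f).comap f := by
    ext x
    rw [mem_iInf_DD_iff_exists hMJ hdisj, mem_comap, Submodule.mem_map]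
    simp only [hf]
  have hdim := finrank_comap_funLeft_add_card (Subtype.val_injective (p := (· ∈ Rᶜ)))
    ((⨅ i, DD l (J i)).map f)
  rw [← hcomap, finrank_map_of_injOn hinj, Fintype.card_coe] at hdim
  have hcardR : #R = ∑ i, #(J i \ M i) :=
    card_biUnion fun i _ j _ hij => (hdisj i j hij).mono_right sdiff_subset
  have := card_add_card_compl R
  lia

end InGeneralPosition

theorem stmt16_general {ι κ V : Type*} [Fintype ι] [DecidableEq ι] [Fintype κ] [DecidableEq κ]
    [AddCommGroup V] [Module ℂ V] [FiniteDimensional ℂ V] {k : ℕ} (hk : finrank ℂ V = k)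
    {l : ι → Dual ℂ V} (hl : InGeneralPosition l) {J : κ → Finset ι} (hJ : ∀ i, k ≤ #(J i)) :
    finrank ℂ ↥(⨅ i, DD l (J i))
      = finrank ℂ ↥(⨅ i ∈ ({i | k < #(J i ∩ overlap J)} : Finset κ),
          DD (fun s : overlap J => l s) ((J i ∩ overlap J).subtype (· ∈ overlap J)))
        + ∑ i, (k - #(J i ∩ overlap J)) + #{s | ∀ i, s ∉ J i} := by
  subst hk
  choose M hCM hMJ hM using fun i => exists_subsuperset_card_eq
    (inter_subset_left : J i ∩ overlap J ⊆ J i) (le_max_right (finrank ℂ V) _)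
    (max_le (hJ i) (card_le_card inter_subset_left))
  have hdisj (i j : κ) (hij : i ≠ j) : Disjoint (J i \ M i) (J j) :=
    (disjoint_sdiff_overlap hij).mono_left fun s hs => by grind
  have hpoints (i : κ) :
      #(J i \ overlap J) = #(J i \ M i) + (finrank ℂ V - #(J i ∩ overlap J)) := by
    have := card_sdiff_add_card_eq_card (hMJ i)
    have := card_sdiff_add_card_inter (J i) (overlap J)
    have := hM i
    lia
  have hshrink := hl.finrank_iInf_DD_add_sum_card_sdiff hMJ
    (fun i => (le_max_left ..).trans (hM i).ge) hdisj
  rw [hl.iInf_DD_eq_biInf_of_card_eq_max hCM hM] at hshrink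
  have hrestrict := finrank_biInf_DD_add_card l {i | finrank ℂ V < #(J i ∩ overlap J)}
    fun i => (inter_subset_right : J i ∩ overlap J ⊆ overlap J)
  have hcompl := card_compl_overlap J
  simp only [hpoints, sum_add_distrib] at hcompl
  have := card_add_card_compl (overlap J)
  lia

/-- Lemma `intersectionone`: for `J₁, …, J_p` of cardinality `≥ 3` with
pairwise intersections of cardinality `≤ 1`, with `C₁` the indices lying in at least two of
the `Jᵢ`, `C₂` the set of `i` with `Jᵢ` disjoint from all other `Jⱼ`, `C₃` the indices outside
all `Jᵢ`, `Σ` the number of `i` with `|Jᵢ ∩ C₁| = 1`, and `d` the dimension, inside `ℂ^{C₁}`,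
of `⋂_{i : |Jᵢ ∩ C₁| ≥ 3} D_{Jᵢ ∩ C₁}` (equal to `|C₁|` when there is no such `i`, the
infimum over the empty family being everything), one has
`dim (D_{J₁} ∩ … ∩ D_{J_p}) = d + Σ + 2|C₂| + |C₃|`. -/
theorem stmt16 (n : ℕ) (hn : 3 ≤ n)
    (l : Fin n → Module.Dual ℂ (Fin 2 → ℂ))
    (hgen : ∀ i j : Fin n, i ≠ j → LinearIndependent ℂ ![l i, l j])
    (p : ℕ) (J : Fin p → Finset (Fin n)) (hJ : ∀ i, 3 ≤ (J i).card)
    (hint : ∀ i j, i ≠ j → (J i ∩ J j).card ≤ 1)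
    (C₁ : Finset (Fin n))
    (hC₁ : C₁ = Finset.univ.filter fun s => ∃ i j : Fin p, i ≠ j ∧ s ∈ J i ∧ s ∈ J j)
    (C₂ : Finset (Fin p))
    (hC₂ : C₂ = Finset.univ.filter fun i => ∀ j, j ≠ i → J i ∩ J j = ∅)
    (C₃ : Finset (Fin n))
    (hC₃ : C₃ = Finset.univ.filter fun s => ∀ i, s ∉ J i)
    (Sg : ℕ) (hSg : Sg = (Finset.univ.filter fun i => (J i ∩ C₁).card = 1).card)
    (Q : Finset (Fin p)) (hQ : Q = Finset.univ.filter fun i => 3 ≤ (J i ∩ C₁).card)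
    (d : ℕ)
    (hd : d = Module.finrank ℂ
      ↥(⨅ i ∈ Q, DD (fun s : ↥C₁ => l s.1) (Finset.subtype (· ∈ C₁) (J i ∩ C₁)))) :
    Module.finrank ℂ ↥(⨅ i, DD l (J i)) = d + Sg + 2 * C₂.card + C₃.card := by
  obtain rfl : C₁ = overlap J := by ext s; rw [hC₁, mem_overlap, mem_filter_univ]
  subst hC₂ hC₃ hSg hQ hd
  have hdim := stmt16_general (finrank_fin_fun ℂ)
    (inGeneralPosition_of_pairwise (finrank_fin_fun ℂ) hgen) fun i => (Nat.le_succ 2).trans (hJ i)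
  rw [sum_two_tsub_card_inter_overlap, ← add_assoc] at hdim
  convert hdim <;> exact Iff.rfl
end
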